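/- arXiv:2503.00009 — 6 statements merged into one kernel-verified Lean document; each statement's English description precedes it below -/
import Mathlib

section
/- Let k be an infinite field, G a finite group, and V a linear representation of G over k. Let x ∈ V be a vector such that the family (g • x)_{g ∈ G} is linearly independent. Then for every y ∈ V, if T_2(y) = T_2(x) and T_3(y) = T_3(x), there exists g ∈ G with y = g • x. (That is, the G-orbit of any vector whose orbit consists of linearly independent vectors is uniquely determined by the second and third invariant tensors.) -/
open TensorProduct

/-- Let `k` be an infinite field, `G` a finite group, and `V` a linear
representation of `G` over `k`. If the orbit `(g • x)_{g ∈ G}` of `x` is linearly independent,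
then any `y` with the same second and third invariant tensors lies in the orbit of `x`. -/
theorem orbit_recovery_from_deg_le_three_invariants
    (k : Type*) [Field k] [Infinite k]
    (G : Type*) [Group G] [Fintype G]
    (V : Type*) [AddCommGroup V] [Module k V]
    (ρ : Representation k G V) (x : V)
    (hx : LinearIndependent k fun g : G => ρ g x)
    (y : V)
    (h2 : (∑ g : G, (ρ g y) ⊗ₜ[k] (ρ g y)) = ∑ g : G, (ρ g x) ⊗ₜ[k] (ρ g x))
    (h3 : (∑ g : G, ((ρ g y) ⊗ₜ[k] (ρ g y)) ⊗ₜ[k] (ρ g y)) =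
        ∑ g : G, ((ρ g x) ⊗ₜ[k] (ρ g x)) ⊗ₜ[k] (ρ g x)) :
    ∃ g : G, y = ρ g x := by
  classical
  obtain ⟨L, hL⟩ := LinearMap.exists_leftInverse_of_injective
    (Finsupp.linearCombination k (fun g : G => ρ g x)) (LinearMap.ker_eq_bot.2 hx)
  have hLe : ∀ g, L (ρ g x) = Finsupp.single g 1 := fun g => by
    have := LinearMap.congr_fun hL (Finsupp.single g 1)
    simpa using this
  let φ : G → (V →ₗ[k] k) := fun h => (Finsupp.lapply h).comp L
  have hφ : ∀ h g, φ h (ρ g x) = if g = h then 1 else 0 := fun h g => by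
    simp [φ, hLe, Finsupp.single_apply]
  have H2 : ∀ α β : V →ₗ[k] k, ∑ g : G, α (ρ g y) * β (ρ g y)
      = ∑ g : G, α (ρ g x) * β (ρ g x) := fun α β => by
    have := congrArg (TensorProduct.lift ((LinearMap.mul k k).compl₁₂ α β)) h2
    simpa using this
  have H3 : ∀ α β : V →ₗ[k] k, ∑ g : G, (α (ρ g y) * β (ρ g y)) • ρ g y
      = ∑ g : G, (α (ρ g x) * β (ρ g x)) • ρ g x := fun α β => by
    have := congrArg (TensorProduct.lift ((LinearMap.lsmul k V).comp
      (TensorProduct.lift ((LinearMap.mul k k).compl₁₂ α β)))) h3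
    simpa using this
  let A : Matrix G G k := Matrix.of fun h g => φ h (ρ g y)
  have hA : A * A.transpose = 1 := by
    ext a b
    simp only [Matrix.mul_apply, Matrix.transpose_apply, A, Matrix.of_apply, H2, hφ,
      Matrix.one_apply]
    simp [eq_comm]
  have hA' : A.transpose * A = 1 := mul_eq_one_comm.1 hA
  let ψ : V →ₗ[k] k := ∑ h : G, φ h y • φ h
  have hψf : ∀ g, ψ (ρ g y) = if g = 1 then 1 else 0 := fun g => by
    have := congrFun (congrFun hA' 1) g
    simp only [Matrix.mul_apply, Matrix.transpose_apply, A, Matrix.of_apply,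
      Matrix.one_apply] at this
    simpa [ψ, eq_comm] using this
  have hψe : ∀ g, ψ (ρ g x) = φ g y := fun g => by
    simp [ψ, hφ]
  have hy : y = ∑ g : G, (φ g y * φ g y) • ρ g x := by
    have := H3 ψ ψ
    simpa [hψf, hψe] using this
  have hc : ∀ a b, φ a y * φ b y = if a = b then φ a y else 0 := fun a b => by
    have := congrArg (φ b) (H3 ψ (φ a))
    simpa [hψf, hψe, hφ, eq_comm] using this
  have hne : ∃ a, φ a y ≠ 0 := by
    by_contra! h
    have := hψf 1
    simp [ψ, h] at this
  obtain ⟨a, ha⟩ := hne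
  have ha1 : φ a y = 1 := by
    have := hc a a
    simpa [ha] using this
  refine ⟨a, hy.trans ?_⟩
  rw [Finset.sum_eq_single a]
  · simp [ha1]
  · intro b _ hb
    have := hc b a
    simp [hb, ha] at this
    simp [this]
  · simp
end

section
/- Let k be an infinite field and G a finite group, and consider the left regular representation of G on the space of functions f : G → k, where (g • f)(h) = f(g⁻¹ h). If f : G → k is a function whose translates (g • f)_{g ∈ G} are linearly independent, then for every f' : G → k with T_2(f') = T_2(f) and T_3(f') = T_3(f) there exists g ∈ G with f' = g • f. In other words, invariants of degree at most three separate orbits of functions with linearly independent translates in the regular representation. -/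
open TensorProduct

/-- The left regular representation of a finite group `G` over `k`:
`(g • f) h = f (g⁻¹ * h)`. -/
def regularTranslate (k : Type*) [Field k] (G : Type*) [Group G]
    (g : G) (f : G → k) : G → k :=
  fun h => f (g⁻¹ * h)

/-- In the regular representation of a finite group `G` over an infinite
field `k`, a function whose translates are linearly independent is determined, up to the
action of `G`, by its second and third invariant tensors. -/
theorem regular_representation_orbit_recovery
    (k : Type*) [Field k] [Infinite k]
    (G : Type*) [Group G] [Fintype G]
    (f : G → k)
    (hf : LinearIndependent k fun g : G => regularTranslate k G g f)
    (f' : G → k)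
    (h2 : (∑ g : G, (regularTranslate k G g f') ⊗ₜ[k] (regularTranslate k G g f')) =
        ∑ g : G, (regularTranslate k G g f) ⊗ₜ[k] (regularTranslate k G g f))
    (h3 : (∑ g : G, ((regularTranslate k G g f') ⊗ₜ[k] (regularTranslate k G g f'))
          ⊗ₜ[k] (regularTranslate k G g f')) =
        ∑ g : G, ((regularTranslate k G g f) ⊗ₜ[k] (regularTranslate k G g f))
          ⊗ₜ[k] (regularTranslate k G g f)) :
    ∃ g : G, f' = regularTranslate k G g f := by
  classical
  set v : G → (G → k) := fun g => regularTranslate k G g f with hv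
  set w : G → (G → k) := fun g => regularTranslate k G g f' with hw
  let B : Module.Basis G k (G → k) := basisOfLinearIndependentOfCardEqFinrank hf (by simp)
  have hB : ∀ g, B g = v g := fun g => by simp [B, hv]
  have hBv : ∀ a g, B.coord a (v g) = if g = a then 1 else 0 := fun a g => by
    rw [← hB, Module.Basis.coord_apply, Module.Basis.repr_self, Finsupp.single_apply]
  let Q : Matrix G G k := fun a g => B.coord a (w g)
  have e2 : ∀ a b, ∑ g, Q a g * Q b g = if a = b then 1 else 0 := by
    intro a b
    have := congrArg (LinearMap.mul' k k ∘ₗ TensorProduct.map (B.coord a) (B.coord b)) h2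
    change _ = (LinearMap.mul' k k ∘ₗ TensorProduct.map (B.coord a) (B.coord b))
      (∑ g : G, v g ⊗ₜ[k] v g) at this
    change (LinearMap.mul' k k ∘ₗ TensorProduct.map (B.coord a) (B.coord b))
      (∑ g : G, w g ⊗ₜ[k] w g) = _ at this
    simp only [map_sum, LinearMap.comp_apply, TensorProduct.map_tmul, LinearMap.mul'_apply,
      hBv] at this
    refine this.trans ?_
    simp [eq_comm]
  have e3 : ∀ a b c, ∑ g, Q a g * Q b g * Q c g = if a = b ∧ a = c then 1 else 0 := by
    intro a b c
    let L : ((G → k) ⊗[k] (G → k)) ⊗[k] (G → k) →ₗ[k] k :=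
      LinearMap.mul' k k ∘ₗ TensorProduct.map
        (LinearMap.mul' k k ∘ₗ TensorProduct.map (B.coord a) (B.coord b)) (B.coord c)
    have := congrArg L h3
    change L (∑ g : G, (w g ⊗ₜ[k] w g) ⊗ₜ[k] w g) = L (∑ g : G, (v g ⊗ₜ[k] v g) ⊗ₜ[k] v g) at this
    simp only [L, map_sum, LinearMap.comp_apply, TensorProduct.map_tmul, LinearMap.mul'_apply,
      hBv] at this
    refine this.trans ?_
    by_cases h : a = b <;> by_cases h' : a = c <;> simp [h, h'] <;> grind
  have o1 : Q * Q.transpose = 1 := by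
    ext a b
    simp [Matrix.mul_apply, e2, Matrix.one_apply]
  have o2 : Q.transpose * Q = 1 := mul_eq_one_comm.mp o1
  have o3 : ∀ g g', ∑ c, Q c g * Q c g' = if g = g' then 1 else 0 := fun g g' => by
    have := congrFun (congrFun o2 g) g'
    simpa [Matrix.mul_apply, Matrix.one_apply] using this
  have key : ∀ a b g', Q a g' * Q b g' = if a = b then Q a g' else 0 := by
    intro a b g'
    calc Q a g' * Q b g' = ∑ g, Q a g * Q b g * ∑ c, Q c g * Q c g' := by simp [o3]
      _ = ∑ c, (∑ g, Q a g * Q b g * Q c g) * Q c g' := by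
        simp only [Finset.mul_sum, Finset.sum_mul]
        rw [Finset.sum_comm]
        simp only [mul_assoc]
      _ = _ := by
        simp only [e3]
        by_cases h : a = b <;> simp [h]
  obtain ⟨a, ha⟩ : ∃ a, Q a 1 ≠ 0 := by
    by_contra! h
    have := o3 1 1
    simp [h] at this
  have ha1 : Q a 1 = 1 := by
    have := key a a 1
    rw [if_pos rfl] at this
    exact mul_left_cancel₀ ha (by rw [this, mul_one])
  have hb : ∀ b, b ≠ a → Q b 1 = 0 := fun b hb => by
    have := key a b 1
    rw [if_neg hb.symm, ha1, one_mul] at this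
    exact this
  refine ⟨a, ?_⟩
  have hw1 : w 1 = f' := by
    ext h
    simp [hw, regularTranslate]
  rw [← hw1]
  change w 1 = v a
  apply B.ext_elem
  intro b
  change Q b 1 = B.coord b (v a)
  rw [hBv]
  by_cases h : a = b
  · subst h; simp [ha1]
  · simp [h, hb b (Ne.symm h)]
end

section
/- Let G be a finite group and k an infinite field, and consider the left regular representation of G on functions f : G → k, where (g • f)(h) = f(g⁻¹ h). The polynomial function f ↦ det M(f), where M(f) is the |G| × |G| matrix with entries M(f)_{g,h} = f(g⁻¹ h), is not identically zero, and for any f : G → k the translates (g • f)_{g ∈ G} are linearly independent if and only if det M(f) ≠ 0. Consequently the set of functions with linearly independent translates is the nonvanishing locus of a nonzero polynomial (i.e. is generic). -/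
/-- The group matrix of `f : G → k`, with entries `M(f)_{g,h} = f (g⁻¹ * h)`. -/
def groupMatrix (k : Type*) [Field k] (G : Type*) [Group G]
    (f : G → k) : Matrix G G k :=
  Matrix.of fun g h => f (g⁻¹ * h)

/-- For a finite group `G` and an infinite field `k`, the polynomial
function `f ↦ det M(f)` is not identically zero, and the translates
`(g • f)_{g ∈ G}`, `(g • f) h = f (g⁻¹ h)`, are linearly independent iff `det M(f) ≠ 0`.
Hence the set of functions with linearly independent translates is the nonvanishing locus
of a nonzero polynomial. -/
theorem group_matrix_det_characterizes_linear_independence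
    (k : Type*) [Field k] [Infinite k]
    (G : Type*) [Group G] [Fintype G] [DecidableEq G] :
    (∃ f : G → k, (groupMatrix k G f).det ≠ 0) ∧
      ∀ f : G → k,
        (LinearIndependent k fun g : G => (fun h => f (g⁻¹ * h) : G → k)) ↔
          (groupMatrix k G f).det ≠ 0 := by
  refine ⟨⟨fun g => if g = 1 then 1 else 0, ?_⟩, fun f => ?_⟩
  · have h : groupMatrix k G (fun g => if g = 1 then 1 else 0) = 1 := by
      ext g h
      simp [groupMatrix, Matrix.one_apply, inv_mul_eq_one]
    rw [h, Matrix.det_one]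
    exact one_ne_zero
  · have h := Matrix.linearIndependent_rows_iff_isUnit (A := groupMatrix k G f)
    rw [Matrix.isUnit_iff_isUnit_det, isUnit_iff_ne_zero] at h
    exact h
end

section
/- Let G be a finite group acting linearly on a vector space V over a field k, and let x ∈ V be such that the family (g • x)_{g ∈ G} is linearly independent. Then the range of the linear map V* → V sending a functional f to ∑_{g ∈ G} f(g • x) · (g • x) equals the linear span of the orbit {g • x : g ∈ G}. (That is, the span of the orbit can be recovered from the second invariant tensor T_2(x) = ∑_{g ∈ G} (g • x) ⊗ (g • x).) -/
/-- If the orbit `(g • x)_{g ∈ G}` is linearly independent, then the range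
of the linear map `V* → V`, `f ↦ ∑ g, f (g • x) • (g • x)` (the map induced by the second
invariant tensor `T₂(x)`) is the span of the orbit. -/
theorem range_of_second_invariant_tensor_map
    (k : Type*) [Field k]
    (G : Type*) [Group G] [Fintype G]
    (V : Type*) [AddCommGroup V] [Module k V]
    (ρ : Representation k G V) (x : V)
    (hx : LinearIndependent k fun g : G => ρ g x) :
    LinearMap.range (∑ g : G, (Module.Dual.eval k V (ρ g x)).smulRight (ρ g x)) =
      Submodule.span k (Set.range fun g : G => ρ g x) := by
  classical
  apply le_antisymm
  · rintro _ ⟨f, rfl⟩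
    rw [LinearMap.sum_apply]
    refine Submodule.sum_mem _ fun g _ => ?_
    rw [LinearMap.smulRight_apply]
    exact Submodule.smul_mem _ _ (Submodule.subset_span ⟨g, rfl⟩)
  · rw [Submodule.span_le]
    rintro _ ⟨h, rfl⟩
    obtain ⟨f, hf⟩ := LinearMap.exists_extend
      ((Finsupp.lapply h : (G →₀ k) →ₗ[k] k) ∘ₗ (hx.repr : _ →ₗ[k] (G →₀ k)))
    have key : ∀ g : G, f (ρ g x) = if g = h then 1 else 0 := by
      intro g
      have h1 := LinearMap.congr_fun hf ⟨ρ g x, Submodule.subset_span ⟨g, rfl⟩⟩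
      have h2 := hx.repr_eq_single g ⟨ρ g x, Submodule.subset_span ⟨g, rfl⟩⟩ rfl
      simp only [LinearMap.comp_apply, Submodule.subtype_apply, Finsupp.lapply_apply] at h1
      rw [h1, h2, Finsupp.single_apply]
    refine ⟨f, ?_⟩
    simp [LinearMap.sum_apply, key]
end

section
/- Let k be an infinite field and let x_1, …, x_n be linearly independent vectors in a k-vector space V. Then there exist linear functionals a, b ∈ V* such that a(x_i) ≠ 0 and b(x_i) ≠ 0 for all i, and the ratios a(x_i)/b(x_i) are pairwise distinct, i.e. a(x_i)·b(x_j) ≠ a(x_j)·b(x_i) for all i ≠ j. -/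
/-- Over an infinite field, given linearly independent vectors
`x_1, …, x_n`, there are linear functionals `a`, `b` that are nonzero on each `x_i` and such
that the ratios `a(x_i)/b(x_i)` are pairwise distinct. -/
theorem exists_functionals_with_distinct_ratios
    (k : Type*) [Field k] [Infinite k]
    (V : Type*) [AddCommGroup V] [Module k V]
    (n : ℕ) (x : Fin n → V) (hx : LinearIndependent k x) :
    ∃ a b : Module.Dual k V,
      (∀ i, a (x i) ≠ 0) ∧ (∀ i, b (x i) ≠ 0) ∧
        ∀ i j, i ≠ j → a (x i) * b (x j) ≠ a (x j) * b (x i) := by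
  have key : ∀ c : Fin n → k, ∃ f : Module.Dual k V, ∀ i, f (x i) = c i := by
    intro c
    obtain ⟨g, hg⟩ := LinearMap.exists_extend ((Module.Basis.span hx).constr k c)
    refine ⟨g, fun i => ?_⟩
    have h := LinearMap.congr_fun hg (Module.Basis.span hx i)
    rw [Module.Basis.constr_basis] at h
    rw [← h, LinearMap.comp_apply, Submodule.subtype_apply, Module.Basis.span_apply]
  have hinf : Set.Infinite ({0}ᶜ : Set k) := (Set.finite_singleton 0).infinite_compl
  let e := hinf.natEmbedding
  obtain ⟨a, ha⟩ := key fun i => (e i : k)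
  obtain ⟨b, hb⟩ := key fun _ => 1
  refine ⟨a, b, fun i => ?_, fun i => ?_, fun i j hij h => hij ?_⟩
  · rw [ha]
    exact (e i).2
  · rw [hb]
    exact one_ne_zero
  · rw [ha, ha, hb, hb, mul_one, mul_one] at h
    exact Fin.ext (e.injective (Subtype.ext h))
end

section
/- Let n ≥ 3 be odd and let the dihedral group D_n act on V = ℂⁿ × ℂ, where D_n acts on ℂⁿ by the standard representation ((r • x)_i = x_{i-1}, (s • x)_i = x_{-i}) and on the second factor ℂ by the character S_0 on which the rotation r acts trivially and the reflection s acts by −1. Then for every x ∈ ℂⁿ and every s_0 ∈ ℂ, the vectors (x, s_0) and (x, −s_0) have equal invariant tensors of degree at most three: T_1(x, s_0) = T_1(x, −s_0), T_2(x, s_0) = T_2(x, −s_0), and T_3(x, s_0) = T_3(x, −s_0). -/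
open TensorProduct

/-- The standard representation of `D_n` on `ℂⁿ`: `(r • x)_i = x_{i-1}`, `(s • x)_i = x_{-i}`. -/
def dihedralStdAct (n : ℕ) : DihedralGroup n → (ZMod n → ℂ) → (ZMod n → ℂ)
  | DihedralGroup.r j, x => fun i => x (i - j)
  | DihedralGroup.sr j, x => fun i => x (-i - j)

/-- The character `S₀` of `D_n`: the rotation acts trivially and the reflection acts by `-1`. -/
def dihedralCharS0 (n : ℕ) : DihedralGroup n → ℂ
  | DihedralGroup.r _ => 1
  | DihedralGroup.sr _ => -1

/-- The action of `D_n` on `V = ℂⁿ × ℂ`, the standard representation plus the character `S₀`. -/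
def dihedralActS0 (n : ℕ) (g : DihedralGroup n) (v : (ZMod n → ℂ) × ℂ) : (ZMod n → ℂ) × ℂ :=
  (dihedralStdAct n g v.1, dihedralCharS0 n g * v.2)

def dihEquivAux (n : ℕ) : ZMod n ⊕ ZMod n ≃ DihedralGroup n where
  toFun := Sum.elim DihedralGroup.r DihedralGroup.sr
  invFun g := match g with
    | DihedralGroup.r j => Sum.inl j
    | DihedralGroup.sr j => Sum.inr j
  left_inv := by rintro (a | a) <;> rfl
  right_inv := by rintro (a | a) <;> rfl

lemma dih_sum_aux {M : Type*} [AddCommMonoid M] (n : ℕ) [NeZero n] (f : DihedralGroup n → M) :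
    ∑ g, f g = ∑ k : ZMod n, f (DihedralGroup.r k) + ∑ k : ZMod n, f (DihedralGroup.sr k) := by
  rw [← (dihEquivAux n).sum_comp, Fintype.sum_sum_type]
  rfl

lemma dih_h1 (n : ℕ) [NeZero n] (x : ZMod n → ℂ) (i : ZMod n) :
    ∑ k, x (-i - k) = ∑ k, x (i - k) := by
  rw [← Equiv.sum_comp (Equiv.addRight (i + i)) (fun k => x (i - k))]
  refine Finset.sum_congr rfl fun k _ => ?_
  simp only [Equiv.coe_addRight]
  congr 1; ring

lemma dih_h2 (n : ℕ) [NeZero n] (x : ZMod n → ℂ) (i j : ZMod n) :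
    ∑ k, x (-i - k) * x (-j - k) = ∑ k, x (i - k) * x (j - k) := by
  rw [← Equiv.sum_comp (Equiv.addRight (i + j)) (fun k => x (i - k) * x (j - k))]
  refine Finset.sum_congr rfl fun k _ => ?_
  simp only [Equiv.coe_addRight]
  rw [mul_comm]
  congr 2 <;> ring

noncomputable def dihBasisAux (n : ℕ) [NeZero n] :
    Module.Basis (ZMod n ⊕ Unit) ℂ ((ZMod n → ℂ) × ℂ) :=
  (Pi.basisFun ℂ (ZMod n)).prod (Module.Basis.singleton Unit ℂ)

lemma dih_repr_inl (n : ℕ) [NeZero n] (v : (ZMod n → ℂ) × ℂ) (i : ZMod n) :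
    (dihBasisAux n).repr v (Sum.inl i) = v.1 i := by
  simp [dihBasisAux]

lemma dih_repr_inr (n : ℕ) [NeZero n] (v : (ZMod n → ℂ) × ℂ) (i : Unit) :
    (dihBasisAux n).repr v (Sum.inr i) = v.2 := by
  simp [dihBasisAux]

/-- For odd `n ≥ 3` and the action of `D_n` on `ℂⁿ × ℂ` (standard
representation plus the character `S₀`), the vectors `(x, s₀)` and `(x, -s₀)` have equal
invariant tensors of degree at most three. -/
theorem dihedral_S0_sign_ambiguity_odd
    (n : ℕ) [NeZero n] (hn : 3 ≤ n) (hodd : Odd n)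
    (x : ZMod n → ℂ) (s₀ : ℂ) :
    (∑ g : DihedralGroup n, dihedralActS0 n g (x, s₀)) =
      (∑ g : DihedralGroup n, dihedralActS0 n g (x, -s₀)) ∧
    (∑ g : DihedralGroup n, (dihedralActS0 n g (x, s₀)) ⊗ₜ[ℂ] (dihedralActS0 n g (x, s₀))) =
      (∑ g : DihedralGroup n, (dihedralActS0 n g (x, -s₀)) ⊗ₜ[ℂ] (dihedralActS0 n g (x, -s₀))) ∧
    (∑ g : DihedralGroup n,
        ((dihedralActS0 n g (x, s₀)) ⊗ₜ[ℂ] (dihedralActS0 n g (x, s₀)))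
          ⊗ₜ[ℂ] (dihedralActS0 n g (x, s₀))) =
      (∑ g : DihedralGroup n,
        ((dihedralActS0 n g (x, -s₀)) ⊗ₜ[ℂ] (dihedralActS0 n g (x, -s₀)))
          ⊗ₜ[ℂ] (dihedralActS0 n g (x, -s₀))) := by
  have h1 := dih_h1 n x
  have h2 := dih_h2 n x
  have h3 : ∀ i j, ∑ k, x (-i - k) * (s₀ * x (-j - k)) = ∑ k, x (i - k) * (s₀ * x (j - k)) := by
    intro i j
    simp only [mul_left_comm _ s₀, ← Finset.mul_sum, h2]
  have h4 : ∀ i j, ∑ k, x (-i - k) * (x (-j - k) * s₀) = ∑ k, x (i - k) * (x (j - k) * s₀) := by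
    intro i j
    simp only [← mul_assoc, ← Finset.sum_mul, h2]
  refine ⟨?_, ?_, ?_⟩
  · apply (dihBasisAux n).ext_elem
    rintro (i | i) <;>
    simp [dih_sum_aux, dih_repr_inl, dih_repr_inr, dihedralActS0, dihedralStdAct, dihedralCharS0,
      ]
  · apply ((dihBasisAux n).tensorProduct (dihBasisAux n)).ext_elem
    rintro ⟨i | i, j | j⟩ <;>
    simp [dih_sum_aux, dih_repr_inl, dih_repr_inr, dihedralActS0, dihedralStdAct, dihedralCharS0,
      ← Finset.sum_mul, ← Finset.mul_sum, h1]
  · apply (((dihBasisAux n).tensorProduct (dihBasisAux n)).tensorProduct (dihBasisAux n)).ext_elem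
    rintro ⟨⟨i | i, j | j⟩, k | k⟩ <;>
    simp [dih_sum_aux, dih_repr_inl, dih_repr_inr, dihedralActS0, dihedralStdAct, dihedralCharS0,
      ← Finset.sum_mul, ← Finset.mul_sum, h1, h2, h3, h4]
end
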